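/- Newton's first law for extended bodies in flat spacetime: let T be a mass–momentum field on flat Newtonian spacetime satisfying the conservation condition, the mass condition, and having slab-compact support, and suppose T is not identically zero. Then: (i) the mass M(t) is a positive constant M > 0 independent of t, and the momentum P^b(t) = P^b is independent of t; (ii) for every t ∈ ℝ there is a unique center of mass q(t) ∈ ℝ³ (the unique point with ∫_{ℝ³} (x − q(t)) T^{00}(t,x) dx = 0); and (iii) the center of mass moves uniformly on a straight line: q(t) = q(0) + t·v for all t, where v ∈ ℝ³ has components v^i = P^i / M. In particular the worldline t ↦ (t, q(t)) is a straight line in ℝ⁴, i.e., a geodesic of the flat connection. -/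

import Mathlib

/-!
Everything follows from one transport identity, `hasDerivAt_integral_slice`: for a `C¹` vector field
`F` on spacetime with slab-compact support,
`d/dt ∫ F⁰(t,x) dx = ∫ (∑ₐ ∂ₐ Fᵃ)(t,x) dx`.
Indeed one may differentiate under the integral sign, because near a given time the support stays in
a fixed compact set (`slice_support_uniform`), and each spatial term `∫ ∂ᵢ Fⁱ(t,x) dx` vanishes by
integration by parts (`integral_spatial_deriv`).

For `Fᵃ = T^{ab}` the divergence is zero, so the momentum is constant. For `Fᵃ = xⁱ T^{a0}` the
divergence is `T^{i0} = T^{0i}`, so the first moment `∫ xⁱ T⁰⁰` has the constant derivative `Pⁱ`.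
The mass condition makes `T⁰⁰ ≥ 0`, with strict inequality wherever `T ≠ 0`, hence `M > 0`; the
center of mass is then the first moment divided by `M`.
-/


open MeasureTheory

noncomputable section

/-- Flat Newtonian spacetime ℝ⁴, coordinates x⁰,…,x³ with x⁰ time. -/
abbrev Spacetime : Type := Fin 4 → ℝ

/-- Space ℝ³. -/
abbrev Space : Type := Fin 3 → ℝ

/-- The spacetime point with time `t` and spatial part `x`. -/
def pt (t : ℝ) (x : Space) : Spacetime := Fin.cons t x

/-- A mass–momentum field: smooth and symmetric. -/
def IsMassMomentum (T : Spacetime → Fin 4 → Fin 4 → ℝ) : Prop :=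
  (∀ a b : Fin 4, ContDiff ℝ (⊤ : ℕ∞) fun p => T p a b) ∧
  (∀ p : Spacetime, ∀ a b : Fin 4, T p a b = T p b a)

/-- The conservation condition: ∑ₐ ∂ₐ T^{ab} = 0 everywhere. -/
def ConservationCond (T : Spacetime → Fin 4 → Fin 4 → ℝ) : Prop :=
  ∀ (p : Spacetime) (b : Fin 4),
    ∑ a : Fin 4, fderiv ℝ (fun q => T q a b) p (Pi.single a 1) = 0

/-- The mass condition: at every point, either T = 0 or T⁰⁰ > 0. -/
def MassCond (T : Spacetime → Fin 4 → Fin 4 → ℝ) : Prop :=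
  ∀ p : Spacetime, T p = 0 ∨ 0 < T p 0 0

/-- Slab-compact support: supp T ∩ (K × ℝ³) is compact for compact K ⊆ ℝ. -/
def SlabCompact (T : Spacetime → Fin 4 → Fin 4 → ℝ) : Prop :=
  ∀ K : Set ℝ, IsCompact K → IsCompact (tsupport T ∩ {p : Spacetime | p 0 ∈ K})

/-- The momentum at time `t`: P^b(t) = ∫_{ℝ³} T^{0b}(t,x) dx.  The mass at time
`t` is `momentum T t 0`. -/
def momentum (T : Spacetime → Fin 4 → Fin 4 → ℝ) (t : ℝ) (b : Fin 4) : ℝ :=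
  ∫ x : Space, T (pt t x) 0 b

/-- `q` is a center of mass of `T` at time `t`: ∫ (x − q) T⁰⁰(t,x) dx = 0. -/
def IsCenterOfMass (T : Spacetime → Fin 4 → Fin 4 → ℝ) (t : ℝ) (q : Space) : Prop :=
  ∀ i : Fin 3, (∫ x : Space, (x i - q i) * T (pt t x) 0 0) = 0

theorem continuous_pt : Continuous fun z : ℝ × Space => pt z.1 z.2 :=
  Continuous.finCons (A := fun _ : Fin 4 => ℝ) continuous_fst continuous_snd

theorem pt_zero (t : ℝ) (x : Space) : pt t x 0 = t := rfl

theorem pt_succ (t : ℝ) (x : Space) (i : Fin 3) : pt t x i.succ = x i := rfl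

theorem hasDerivAt_pt_time {f : Spacetime → ℝ} (hf : Differentiable ℝ f) (t : ℝ) (x : Space) :
    HasDerivAt (fun s => f (pt s x)) (fderiv ℝ f (pt t x) (Pi.single 0 1)) t := by
  have h : HasDerivAt (fun s => pt s x) (Pi.single 0 1 : Spacetime) t := by
    rw [hasDerivAt_pi]
    intro a
    refine Fin.cases ?_ (fun i => ?_) a
    · simpa [pt_zero] using hasDerivAt_id' t
    · simpa [pt_succ] using hasDerivAt_const t (x i)
  exact (hf (pt t x)).hasFDerivAt.comp_hasDerivAt t h

theorem hasLineDerivAt_pt_space {f : Spacetime → ℝ} (hf : Differentiable ℝ f) (t : ℝ) (x : Space)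
    (i : Fin 3) :
    HasLineDerivAt ℝ (fun y => f (pt t y)) (fderiv ℝ f (pt t x) (Pi.single i.succ 1)) x
      (Pi.single i 1) := by
  have h : HasDerivAt (fun s : ℝ => pt t (x + s • (Pi.single i 1 : Space)))
      (Pi.single i.succ 1 : Spacetime) 0 := by
    rw [hasDerivAt_pi]
    intro a
    refine Fin.cases ?_ (fun j => ?_) a
    · simpa [pt_zero] using hasDerivAt_const (0 : ℝ) t
    · have := ((hasDerivAt_id (0 : ℝ)).mul_const ((Pi.single i 1 : Space) j)).const_add (x j)
      simpa [pt_succ, Pi.single_apply, Fin.succ_inj] using this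
  have h0 : pt t x = pt t (x + (0 : ℝ) • (Pi.single i 1 : Space)) := by simp
  have h1 : HasFDerivAt f (fderiv ℝ f (pt t x)) (pt t (x + (0 : ℝ) • (Pi.single i 1 : Space))) := by
    rw [← h0]; exact (hf (pt t x)).hasFDerivAt
  exact h1.comp_hasDerivAt (0 : ℝ) h

/-- A closed set of spacetime whose intersection with each compact time slab is compact. -/
def SlabSet (S : Set Spacetime) : Prop :=
  IsClosed S ∧ ∀ K : Set ℝ, IsCompact K → IsCompact (S ∩ {p : Spacetime | p 0 ∈ K})

theorem fderiv_eq_zero_off {S : Set Spacetime} (hS : IsClosed S) {f : Spacetime → ℝ}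
    (hf : ∀ p ∉ S, f p = 0) : ∀ p ∉ S, fderiv ℝ f p = 0 := by
  intro p hp
  have h : f =ᶠ[nhds p] fun _ => 0 := by
    filter_upwards [hS.isOpen_compl.mem_nhds hp] with q hq using hf q hq
  rw [h.fderiv_eq]
  simp

/-- For times in a compact set, the part of `S` seen in space lies in one fixed compact set. -/
theorem slice_support_uniform {S : Set Spacetime} (hS : SlabSet S) {K : Set ℝ} (hK : IsCompact K) :
    ∃ C : Set Space, IsCompact C ∧ ∀ t ∈ K, ∀ x ∉ C, pt t x ∉ S := by
  refine ⟨(fun p : Spacetime => fun i : Fin 3 => p i.succ) '' (S ∩ {p : Spacetime | p 0 ∈ K}),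
    (hS.2 K hK).image (by fun_prop), fun t ht x hx hp => hx ⟨pt t x, ⟨hp, ht⟩, rfl⟩⟩

theorem hasCompactSupport_slice {S : Set Spacetime} (hS : SlabSet S) {f : Spacetime → ℝ}
    (hf : ∀ p ∉ S, f p = 0) (t : ℝ) : HasCompactSupport fun x => f (pt t x) := by
  obtain ⟨C, hC, h⟩ := slice_support_uniform hS (isCompact_singleton (x := t))
  exact HasCompactSupport.intro hC fun x hx => hf _ (h t rfl x hx)

theorem continuous_slice {f : Spacetime → ℝ} (hf : Continuous f) (t : ℝ) :
    Continuous fun x => f (pt t x) :=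
  hf.comp (continuous_pt.comp (Continuous.prodMk_right t))

theorem integrable_slice {S : Set Spacetime} (hS : SlabSet S) {f : Spacetime → ℝ}
    (hc : Continuous f) (hf : ∀ p ∉ S, f p = 0) (t : ℝ) : Integrable fun x => f (pt t x) :=
  (continuous_slice hc t).integrable_of_hasCompactSupport (hasCompactSupport_slice hS hf t)

theorem continuous_fderiv_dir {f : Spacetime → ℝ} (hf : ContDiff ℝ 1 f) (v : Spacetime) :
    Continuous fun p => fderiv ℝ f p v :=
  (hf.continuous_fderiv one_ne_zero).clm_apply continuous_const

theorem integral_spatial_deriv {S : Set Spacetime} (hS : SlabSet S) {f : Spacetime → ℝ}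
    (hc : ContDiff ℝ 1 f) (hf : ∀ p ∉ S, f p = 0) (t : ℝ) (i : Fin 3) :
    ∫ x, fderiv ℝ f (pt t x) (Pi.single i.succ 1) = 0 := by
  have hint := integrable_slice hS hc.continuous hf t
  have hint' := integrable_slice hS (continuous_fderiv_dir hc (Pi.single i.succ 1))
    (fun p hp => by simp [fderiv_eq_zero_off hS.1 hf p hp]) t
  -- Integration by parts against the constant function `1`.
  have := integral_bilinear_hasLineDerivAt_right_eq_neg_left_of_integrable
    (μ := (volume : Measure Space)) (f := fun _ : Space => (1 : ℝ)) (f' := fun _ => 0)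
    (g := fun x => f (pt t x)) (g' := fun x => fderiv ℝ f (pt t x) (Pi.single i.succ 1))
    (v := Pi.single i 1) (B := ContinuousLinearMap.mul ℝ ℝ)
    (by simp) (by simpa using hint') (by simpa using hint)
    (fun x _ => by simpa [HasLineDerivAt] using hasDerivAt_const (0 : ℝ) (1 : ℝ))
    (fun x _ => hasLineDerivAt_pt_space (hc.differentiable one_ne_zero) t x i)
  simpa using this

theorem hasDerivAt_integral_time {S : Set Spacetime} (hS : SlabSet S) {f : Spacetime → ℝ}
    (hc : ContDiff ℝ 1 f) (hf : ∀ p ∉ S, f p = 0) (t : ℝ) :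
    HasDerivAt (fun s => ∫ x, f (pt s x)) (∫ x, fderiv ℝ f (pt t x) (Pi.single 0 1)) t := by
  have hK : IsCompact (Metric.closedBall t 1) := isCompact_closedBall t 1
  obtain ⟨C, hC, hCS⟩ := slice_support_uniform hS hK
  have hd := continuous_fderiv_dir hc (Pi.single 0 1)
  have hd0 : ∀ p ∉ S, fderiv ℝ f p (Pi.single 0 1) = 0 := fun p hp => by
    simp [fderiv_eq_zero_off hS.1 hf p hp]
  obtain ⟨B, hB⟩ := (hK.prod hC).exists_bound_of_continuousOn (hd.comp continuous_pt).continuousOn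
  refine (hasDerivAt_integral_of_dominated_loc_of_deriv_le (μ := (volume : Measure Space))
    (F := fun s x => f (pt s x)) (F' := fun s x => fderiv ℝ f (pt s x) (Pi.single 0 1))
    (bound := C.indicator fun _ => B) (Metric.closedBall_mem_nhds t one_pos)
    (Filter.Eventually.of_forall fun s => (continuous_slice hc.continuous s).aestronglyMeasurable)
    (integrable_slice hS hc.continuous hf t) (continuous_slice hd t).aestronglyMeasurable
    (Filter.Eventually.of_forall fun x s hs => ?_) ?_
    (Filter.Eventually.of_forall fun x s _ =>
      hasDerivAt_pt_time (hc.differentiable one_ne_zero) s x)).2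
  · by_cases hx : x ∈ C
    · simpa [hx] using hB (s, x) ⟨hs, hx⟩
    · simp [hx, hd0 _ (hCS s hs x hx)]
  · rw [integrable_indicator_iff hC.measurableSet]
    exact integrableOn_const hC.measure_lt_top.ne

/-- Transport identity: the flux terms integrate to zero, so the time derivative of the charge
`∫ F⁰` is the integral of the spacetime divergence of `F`. -/
theorem hasDerivAt_integral_slice {S : Set Spacetime} (hS : SlabSet S) {F : Fin 4 → Spacetime → ℝ}
    (hc : ∀ a, ContDiff ℝ 1 (F a)) (hF : ∀ a, ∀ p ∉ S, F a p = 0) (t : ℝ) :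
    HasDerivAt (fun s => ∫ x, F 0 (pt s x))
      (∫ x, ∑ a : Fin 4, fderiv ℝ (F a) (pt t x) (Pi.single a 1)) t := by
  have h := hasDerivAt_integral_time hS (hc 0) (hF 0) t
  rw [integral_finsetSum _ fun a _ => integrable_slice hS (continuous_fderiv_dir (hc a) _)
    (fun p hp => by simp [fderiv_eq_zero_off hS.1 (hF a) p hp]) t, Fin.sum_univ_succ]
  simpa only [integral_spatial_deriv hS (hc _) (hF _) t, Finset.sum_const_zero, add_zero] using h

/-- The divergence of `xⁱ T^{a0}` in `a` is `T^{i0}` once `T` is conserved. -/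
theorem divergence_moment {T : Spacetime → Fin 4 → Fin 4 → ℝ}
    (hT : ∀ a b : Fin 4, Differentiable ℝ fun p => T p a b) (hcons : ConservationCond T)
    (p : Spacetime) (i : Fin 4) :
    ∑ a : Fin 4, fderiv ℝ (fun q : Spacetime => q i * T q a 0) p (Pi.single a 1) = T p i 0 := by
  have h : ∀ a : Fin 4, fderiv ℝ (fun q : Spacetime => q i * T q a 0) p (Pi.single a 1) =
      p i * fderiv ℝ (fun q => T q a 0) p (Pi.single a 1) + T p a 0 * (Pi.single a 1 : Spacetime) i :=
    fun a => by
    have h1 : HasFDerivAt (fun q : Spacetime => q i)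
        (ContinuousLinearMap.proj (R := ℝ) (φ := fun _ : Fin 4 => ℝ) i) p :=
      (ContinuousLinearMap.proj (R := ℝ) (φ := fun _ : Fin 4 => ℝ) i).hasFDerivAt
    have h2 : HasFDerivAt (fun q : Spacetime => q i * T q a 0) _ p :=
      h1.mul (hT a 0 p).hasFDerivAt
    rw [h2.fderiv]
    simp
  simp_rw [h, Finset.sum_add_distrib, ← Finset.mul_sum, hcons p 0]
  simp [Pi.single_apply]

/-- Newton's first law for extended bodies in flat spacetime: the mass is a
positive constant, the momentum is constant, and the (unique) center of mass
moves uniformly on a straight line with velocity v = P/M. -/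
theorem newtons_first_law (T : Spacetime → Fin 4 → Fin 4 → ℝ)
    (hT : IsMassMomentum T) (hcons : ConservationCond T) (hmass : MassCond T)
    (hsupp : SlabCompact T) (hne : ∃ p : Spacetime, T p ≠ 0) :
    ∃ M : ℝ, 0 < M ∧ (∀ t : ℝ, momentum T t 0 = M) ∧
      (∀ (b : Fin 4) (t₁ t₂ : ℝ), momentum T t₁ b = momentum T t₂ b) ∧
      ∃ q : ℝ → Space,
        (∀ t : ℝ, IsCenterOfMass T t (q t)) ∧
        (∀ (t : ℝ) (q' : Space), IsCenterOfMass T t q' → q' = q t) ∧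
        (∀ t : ℝ, q t = q 0 + t • (fun i : Fin 3 => momentum T 0 i.succ / M)) := by
  have hS : SlabSet (tsupport T) := ⟨isClosed_tsupport T, hsupp⟩
  have hc : ∀ a b : Fin 4, ContDiff ℝ 1 fun p => T p a b := fun a b =>
    (hT.1 a b).of_le (by exact_mod_cast le_top)
  have h0 : ∀ a b : Fin 4, ∀ p ∉ tsupport T, T p a b = 0 := fun a b p hp => by
    rw [image_eq_zero_of_notMem_tsupport hp]; rfl
  have hmom : ∀ (b : Fin 4) (t₁ t₂ : ℝ), momentum T t₁ b = momentum T t₂ b := by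
    intro b
    have hd : ∀ t, HasDerivAt (fun s => momentum T s b) 0 t := fun t => by
      simpa [hcons _ b, momentum] using hasDerivAt_integral_slice hS (F := fun a p => T p a b)
        (fun a => hc a b) (fun a => h0 a b) t
    exact is_const_of_deriv_eq_zero (fun t => (hd t).differentiableAt) fun t => (hd t).deriv
  obtain ⟨p, hp⟩ := hne
  have hpos : 0 < momentum T 0 0 := by
    rw [hmom 0 0 (p 0)]
    refine (continuous_slice (hc 0 0).continuous (p 0)).integral_pos_of_hasCompactSupport_nonneg_nonzero
      (x := Fin.tail p) (hasCompactSupport_slice hS (h0 0 0) (p 0)) (fun x => ?_) ?_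
    · rcases hmass (pt (p 0) x) with h | h
      · simp [h]
      · exact h.le
    · have : pt (p 0) (Fin.tail p) = p := Fin.cons_self_tail p
      rw [this]
      exact ((hmass p).resolve_left hp).ne'
  have hmd : ∀ (i : Fin 3) (t : ℝ),
      HasDerivAt (fun s => ∫ x : Space, x i * T (pt s x) 0 0) (momentum T 0 i.succ) t := by
    intro i t
    have h := hasDerivAt_integral_slice hS (F := fun a p => p i.succ * T p a 0)
      (fun a => (contDiff_apply ℝ ℝ i.succ).mul (hc a 0))
      (fun a p hp => by simp [h0 a 0 p hp]) t
    simp only [divergence_moment (fun a b => (hc a b).differentiable one_ne_zero) hcons,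
      hT.2 _ i.succ 0] at h
    rw [hmom i.succ 0 t]
    exact h
  have hlin : ∀ (i : Fin 3) (t : ℝ), ∫ x : Space, x i * T (pt t x) 0 0 =
      (∫ x : Space, x i * T (pt 0 x) 0 0) + t * momentum T 0 i.succ := by
    intro i t
    have hd : ∀ s, HasDerivAt (fun s => (∫ x : Space, x i * T (pt s x) 0 0) -
        s * momentum T 0 i.succ) 0 s := fun s => by
      simpa using (hmd i s).fun_sub ((hasDerivAt_id' s).mul_const (momentum T 0 i.succ))
    have := is_const_of_deriv_eq_zero (fun s => (hd s).differentiableAt) (fun s => (hd s).deriv) t 0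
    simp only [zero_mul, sub_zero] at this
    linarith
  have hcm : ∀ (t : ℝ) (q : Space) (i : Fin 3), ∫ x : Space, (x i - q i) * T (pt t x) 0 0 =
      (∫ x : Space, x i * T (pt t x) 0 0) - q i * momentum T 0 0 := by
    intro t q i
    have h1 : Integrable fun x : Space => x i * T (pt t x) 0 0 :=
      integrable_slice hS (f := fun p => p i.succ * T p 0 0)
        ((continuous_apply _).mul (hc 0 0).continuous) (fun p hp => by simp [h0 0 0 p hp]) t
    have h2 := (integrable_slice hS (hc 0 0).continuous (h0 0 0) t).const_mul (q i)
    simp_rw [sub_mul]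
    rw [integral_sub h1 h2, integral_const_mul, hmom 0 0 t]
    rfl
  refine ⟨momentum T 0 0, hpos, fun t => hmom 0 t 0, hmom,
    fun t i => (∫ x : Space, x i * T (pt t x) 0 0) / momentum T 0 0, fun t i => ?_,
    fun t q' hq' => ?_, fun t => ?_⟩
  · refine (hcm t (fun i => (∫ x : Space, x i * T (pt t x) 0 0) / momentum T 0 0) i).trans ?_
    rw [div_mul_cancel₀ _ hpos.ne', sub_self]
  · funext i
    have := hq' i
    rw [hcm] at this
    rw [eq_div_iff hpos.ne']
    linarith
  · funext i
    simp only [Pi.add_apply, Pi.smul_apply, smul_eq_mul]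
    rw [hlin i t]
    ring

end
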